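/- arXiv:1407.6448 — 3 statements merged into one kernel-verified Lean document; each statement's English description precedes it below -/
import Mathlib

section
/- Assume condition (A)₀ and condition (K). Then there exist constants C > 0 and c > 0 such that for every r ≥ 0, every ω ∈ S^{n−1}, and every differentiable function û : [0,∞) → ℂᵐ satisfying A⁰û′(t) + i r A(ω) û(t) + L û(t) = 0 for all t ≥ 0, one has |û(t)| ≤ C e^{−c ρ(r) t} |û(0)| for all t ≥ 0. -/
open Matrix BigOperators Finset

noncomputable section

/-- Complexification of a real matrix. -/
def cmap {a b : ℕ} (X : Matrix (Fin a) (Fin b) ℝ) : Matrix (Fin a) (Fin b) ℂ :=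
  X.map (fun x => (x : ℂ))

/-- Real part of the standard Hermitian inner product `⟨x, y⟩ = ∑ xᵢ conj yᵢ` on `ℂᵐ`. -/
def reIP {m : ℕ} (x y : Fin m → ℂ) : ℝ := (∑ i, x i * (starRingEnd ℂ) (y i)).re

/-- Symmetric part `X₁ = (X + Xᵀ)/2` of a real square matrix. -/
def symP {m : ℕ} (X : Matrix (Fin m) (Fin m) ℝ) : Matrix (Fin m) (Fin m) ℝ :=
  (2⁻¹ : ℝ) • (X + Xᵀ)

/-- Kernel of (the complexification of) a real matrix, as a subset of `ℂᵐ`. -/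
def kerC {m : ℕ} (L : Matrix (Fin m) (Fin m) ℝ) : Set (Fin m → ℂ) :=
  {z | (cmap L).mulVec z = 0}

/-- Euclidean norm on `ℂᵐ`. -/
def cnrm {m : ℕ} (z : Fin m → ℂ) : ℝ := Real.sqrt (∑ i, Complex.normSq (z i))

/-!
The energy `⟨A⁰u, u⟩` decreases only at the rate `2⟨Lu, u⟩`, which says nothing about `u` on
`ker L`. Subtracting the correction `δ r / (1 + r²) ⟨i K A⁰u, u⟩`, which is real because `K A⁰` is
skew, makes the Lyapunov function gain the dissipation `2 δ ρ(r) Re⟨K A u, u⟩`, positive on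
`ker L`. By compactness of the parameter space times the unit sphere, `Re⟨K A u, u⟩ + M ⟨Lu, u⟩`
is coercive uniformly in the parameter; the remaining term `⟨K L u, u⟩` is absorbed by Young's
inequality, since `|Lu|² ≤ ‖L‖ ⟨Lu, u⟩`. For small `δ` the Lyapunov function stays equivalent to
`|u|²`, and Grönwall's inequality gives the rate `ρ(r)`.
-/

open Complex ContinuousLinearMap WithLp
open scoped InnerProductSpace

section Gronwall

lemma le_mul_exp_of_hasDerivWithinAt_le {f f' : ℝ → ℝ} {k : ℝ}
    (hf : ∀ t, 0 ≤ t → HasDerivWithinAt f (f' t) (Set.Ici 0) t)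
    (hf' : ∀ t, 0 ≤ t → f' t ≤ k * f t) {t : ℝ} (ht : 0 ≤ t) :
    f t ≤ f 0 * Real.exp (k * t) := by
  have continuous : ContinuousOn f (Set.Icc 0 t) := fun s hs =>
    (hf s hs.1).continuousWithinAt.mono Set.Icc_subset_Ici_self
  have gronwall := le_gronwallBound_of_liminf_deriv_right_le continuous (K := k) (ε := 0)
    (fun s hs _ hr => ((hf s hs.1).mono (Set.Ici_subset_Ici.2 hs.1)).liminf_right_slope_le hr)
    le_rfl (fun s hs => (hf' s hs.1).trans_eq (add_zero _).symm) t (Set.right_mem_Icc.2 ht)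
  rwa [gronwallBound_ε0, sub_zero] at gronwall

lemma norm_le_exp_of_lyapunov {E : Type*} [SeminormedAddCommGroup E] {u : ℝ → E}
    {V V' : ℝ → ℝ} {α β γ : ℝ} (hα : 0 < α) (hβ : 0 < β) (hγ : 0 ≤ γ)
    (hV : ∀ t, 0 ≤ t → HasDerivWithinAt V (V' t) (Set.Ici 0) t)
    (lower : ∀ t, 0 ≤ t → α * ‖u t‖ ^ 2 ≤ V t) (upper : ∀ t, 0 ≤ t → V t ≤ β * ‖u t‖ ^ 2)
    (dissipation : ∀ t, 0 ≤ t → V' t ≤ -(γ * ‖u t‖ ^ 2)) {t : ℝ} (ht : 0 ≤ t) :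
    ‖u t‖ ≤ √(β / α) * Real.exp (-(γ / (2 * β) * t)) * ‖u 0‖ := by
  have rate : ∀ s, 0 ≤ s → V' s ≤ -(γ / β) * V s := fun s hs => by
    have := mul_le_mul_of_nonneg_left (upper s hs) (div_nonneg hγ hβ.le)
    rw [← mul_assoc, div_mul_cancel₀ _ hβ.ne'] at this
    linarith [dissipation s hs]
  have energy : α * ‖u t‖ ^ 2 ≤ β * ‖u 0‖ ^ 2 * Real.exp (-(γ / β) * t) :=
    calc α * ‖u t‖ ^ 2 ≤ V t := lower t ht
      _ ≤ V 0 * Real.exp (-(γ / β) * t) := le_mul_exp_of_hasDerivWithinAt_le hV rate ht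
      _ ≤ β * ‖u 0‖ ^ 2 * Real.exp (-(γ / β) * t) := by gcongr; exact upper 0 le_rfl
  have exp_sq : Real.exp (-(γ / (2 * β) * t)) ^ 2 = Real.exp (-(γ / β) * t) := by
    rw [← Real.exp_nat_mul]
    congr 1
    push_cast
    ring
  refine (sq_le_sq₀ (norm_nonneg _) (by positivity)).1 ?_
  rw [mul_pow, mul_pow, Real.sq_sqrt (by positivity), exp_sq, div_mul_eq_mul_div,
    div_mul_eq_mul_div, le_div_iff₀ hα]
  linarith

end Gronwall

section QuadraticForm

variable {E : Type*} [NormedAddCommGroup E] [InnerProductSpace ℂ E]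

lemma abs_reApplyInnerSelf_le {𝕜 F : Type*} [RCLike 𝕜] [NormedAddCommGroup F]
    [InnerProductSpace 𝕜 F] (T : F →L[𝕜] F) (x : F) :
    |T.reApplyInnerSelf x| ≤ ‖T‖ * ‖x‖ ^ 2 :=
  calc |T.reApplyInnerSelf x| ≤ ‖T x‖ * ‖x‖ :=
        (RCLike.abs_re_le_norm _).trans (norm_inner_le_norm _ _)
    _ ≤ ‖T‖ * ‖x‖ * ‖x‖ := by gcongr; exact T.le_opNorm x
    _ = ‖T‖ * ‖x‖ ^ 2 := by ring

lemma hasDerivWithinAt_reApplyInnerSelf {T : E →L[ℂ] E} (hT : T.IsSymmetric) {u : ℝ → E}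
    {v : E} {s : Set ℝ} {t : ℝ} (hu : HasDerivWithinAt u v s t) :
    HasDerivWithinAt (fun τ => T.reApplyInnerSelf (u τ)) (2 * (⟪T v, u t⟫_ℂ).re) s t := by
  have hTu : HasDerivWithinAt (fun τ => T (u τ)) (T v) s t :=
    (T.restrictScalars ℝ).hasFDerivAt.comp_hasDerivWithinAt t hu
  have symm : (⟪T (u t), v⟫_ℂ).re = (⟪T v, u t⟫_ℂ).re := by
    rw [hT.apply_clm, ← inner_conj_symm, conj_re]
  have := reCLM.hasFDerivAt.comp_hasDerivWithinAt t (hTu.inner ℂ hu)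
  rw [map_add, reCLM_apply, reCLM_apply, symm, ← two_mul] at this
  exact this

lemma norm_apply_sq_le_of_isPositive [CompleteSpace E] {L : E →L[ℂ] E} (hL : L.IsPositive) (x : E) :
    ‖L x‖ ^ 2 ≤ ‖L‖ * L.reApplyInnerSelf x := by
  have hL0 : 0 ≤ L := (nonneg_iff_isPositive L).2 hL
  set S := CFC.sqrt L
  have S_adj : star S = S := (CFC.sqrt_nonneg L).isSelfAdjoint
  have S_sq : S * S = L := CFC.sqrt_mul_sqrt_self L
  have norm_S : ‖S‖ ^ 2 = ‖L‖ := by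
    rw [sq, ← CStarRing.norm_star_mul_self, S_adj, S_sq]
  have norm_Sx : ‖S x‖ ^ 2 = L.reApplyInnerSelf x := by
    rw [apply_norm_sq_eq_inner_adjoint_left, ← star_eq_adjoint, S_adj,
      ← ContinuousLinearMap.mul_def, S_sq]
    rfl
  calc ‖L x‖ ^ 2 = ‖S (S x)‖ ^ 2 := by rw [← mul_apply_eq_comp, S_sq]
    _ ≤ (‖S‖ * ‖S x‖) ^ 2 := by gcongr; exact S.le_opNorm _
    _ = ‖L‖ * L.reApplyInnerSelf x := by rw [mul_pow, norm_S, norm_Sx]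

end QuadraticForm

section Compactness

lemma exists_pos_le_add_mul {X : Type*} [TopologicalSpace X] [CompactSpace X] {p l : X → ℝ}
    (hp : Continuous p) (hl : Continuous l) (hl0 : ∀ x, 0 ≤ l x)
    (pos : ∀ x, l x = 0 → 0 < p x) : ∃ κ > 0, ∃ M ≥ 0, ∀ x, κ ≤ p x + M * l x := by
  obtain ⟨B, hB⟩ := (isCompact_range hp).bddBelow
  obtain ⟨ε, hε, hlε⟩ := (isClosed_le hp continuous_const).isCompact.exists_forall_le'
    (s := {x | p x ≤ 0}) hl.continuousOn (a := 0)
    fun x hx => (hl0 x).lt_of_ne' fun h => (pos x h).not_ge hx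
  set M := (|B| + 1) / ε
  have hM : 0 ≤ M := by positivity
  have add_pos : ∀ x, 0 < p x + M * l x := fun x => by
    rcases lt_or_ge 0 (p x) with hx | hx
    · linarith [mul_nonneg hM (hl0 x)]
    · have hMε : M * ε = |B| + 1 := div_mul_cancel₀ _ hε.ne'
      linarith [mul_le_mul_of_nonneg_left (hlε x hx) hM, hB (Set.mem_range_self x), neg_abs_le B]
  obtain ⟨κ, hκ, le⟩ := isCompact_univ.exists_forall_le'
    (hp.add (continuous_const.mul hl)).continuousOn fun x _ => add_pos x
  exact ⟨κ, hκ, M, hM, fun x => le x (Set.mem_univ x)⟩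

variable {E : Type*} [NormedAddCommGroup E] [InnerProductSpace ℂ E] [FiniteDimensional ℂ E]

lemma exists_coercive_of_pos_on_ker {Ω : Type*} [TopologicalSpace Ω] [CompactSpace Ω]
    {P : Ω → E →L[ℂ] E} {L : E →L[ℂ] E} (hP : Continuous P) (hL : L.IsPositive)
    (pos : ∀ ω x, L x = 0 → x ≠ 0 → 0 < (P ω).reApplyInnerSelf x) :
    ∃ κ > 0, ∃ M ≥ 0, ∀ ω x,
      κ * ‖x‖ ^ 2 ≤ (P ω).reApplyInnerSelf x + M * L.reApplyInnerSelf x := by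
  have : CompleteSpace E := FiniteDimensional.complete ℂ E
  have : ProperSpace E := FiniteDimensional.proper ℂ E
  have hPx : Continuous fun q : Ω × Metric.sphere (0 : E) 1 => P q.1 q.2 :=
    (hP.comp continuous_fst).clm_apply (continuous_subtype_val.comp continuous_snd)
  obtain ⟨κ, hκ, M, hM, le⟩ := exists_pos_le_add_mul
    (p := fun q : Ω × Metric.sphere (0 : E) 1 => (P q.1).reApplyInnerSelf q.2)
    (l := fun q => L.reApplyInnerSelf q.2)
    (continuous_re.comp (hPx.inner (continuous_subtype_val.comp continuous_snd)))
    (L.reApplyInnerSelf_continuous.comp (continuous_subtype_val.comp continuous_snd))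
    (fun q => hL.2 q.2) fun ⟨ω, x⟩ hx => by
      have hLx := norm_apply_sq_le_of_isPositive hL (x : E)
      rw [hx, mul_zero] at hLx
      exact pos ω x (norm_eq_zero.1 (sq_eq_zero_iff.1 (hLx.antisymm (sq_nonneg _))))
        (ne_zero_of_mem_unit_sphere x)
  refine ⟨κ, hκ, M, hM, fun ω x => ?_⟩
  rcases eq_or_ne x 0 with rfl | hx
  · simp [reApplyInnerSelf_apply]
  · have unit : ‖((‖x‖ : ℂ)⁻¹ • x)‖ = 1 := norm_smul_inv_norm hx
    have scaled := le (ω, ⟨(‖x‖ : ℂ)⁻¹ • x, mem_sphere_zero_iff_norm.2 unit⟩)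
    simp only [reApplyInnerSelf_smul, norm_inv, norm_real, norm_norm, inv_pow] at scaled
    have := mul_le_mul_of_nonneg_left scaled (sq_nonneg ‖x‖)
    field_simp at this
    linarith

end Compactness

section Compensation

variable {E : Type*} [NormedAddCommGroup E] [InnerProductSpace ℂ E]

/-- The decay property of the standard type with constants `C` and `c`: the bound
`|u(t)| ≤ C exp(-c ρ(r) t) |u(0)|`, where `ρ(r) = r² / (1 + r²)`, for all solutions on `[0, ∞)` of
`A⁰ u' + i r A u + L u = 0`, uniformly in the frequency `r`. -/
def HasStandardDecay (A0 A L : E →L[ℂ] E) (C c : ℝ) : Prop :=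
  ∀ (r : ℝ) (u u' : ℝ → E), (∀ t, 0 ≤ t → HasDerivWithinAt u (u' t) (Set.Ici 0) t) →
    (∀ t, 0 ≤ t → A0 (u' t) + (r * I) • A (u t) + L (u t) = 0) →
    ∀ t, 0 ≤ t → ‖u t‖ ≤ C * Real.exp (-(c * (r ^ 2 / (1 + r ^ 2)) * t)) * ‖u 0‖

/-- The operator of the Lyapunov form `⟨A⁰x, x⟩ - θ ⟨i K A⁰ x, x⟩`: the energy corrected by the
compensating operator `K` with weight `θ`. -/
def lyapunovOp (A0 K : E →L[ℂ] E) (θ : ℝ) : E →L[ℂ] E :=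
  A0 - (θ * I) • (K * A0)

lemma abs_reApplyInnerSelf_lyapunovOp_sub_le (A0 K : E →L[ℂ] E) (θ : ℝ) (x : E) :
    |(lyapunovOp A0 K θ).reApplyInnerSelf x - A0.reApplyInnerSelf x| ≤
      |θ| * (‖K‖ * ‖A0‖) * ‖x‖ ^ 2 := by
  have correction : (lyapunovOp A0 K θ).reApplyInnerSelf x - A0.reApplyInnerSelf x =
      -((θ * I) • (K * A0)).reApplyInnerSelf x := by
    simp only [lyapunovOp, reApplyInnerSelf_apply, _root_.sub_apply, inner_sub_left, map_sub]
    ring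
  calc |(lyapunovOp A0 K θ).reApplyInnerSelf x - A0.reApplyInnerSelf x|
      ≤ ‖(θ * I) • (K * A0)‖ * ‖x‖ ^ 2 := by
        rw [correction, abs_neg]; exact abs_reApplyInnerSelf_le _ x
    _ = |θ| * ‖K * A0‖ * ‖x‖ ^ 2 := by simp [norm_smul]
    _ ≤ |θ| * (‖K‖ * ‖A0‖) * ‖x‖ ^ 2 := by gcongr; exact norm_mul_le K A0

variable {A0 A L K : E →L[ℂ] E}

lemma isSymmetric_lyapunovOp (hA0 : A0.IsSymmetric) (hK : (I • (K * A0)).IsSymmetric) (θ : ℝ) :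
    (lyapunovOp A0 K θ).IsSymmetric := by
  rw [lyapunovOp, mul_smul]
  exact hA0.sub (hK.smul (conj_ofReal θ))

lemma re_inner_lyapunovOp_of_equation (hA : A.IsSymmetric) (θ r : ℝ) {x v : E}
    (eqn : A0 v + (r * I) • A x + L x = 0) :
    (⟪lyapunovOp A0 K θ v, x⟫_ℂ).re =
      -(L.reApplyInnerSelf x + θ * (r * (K * A).reApplyInnerSelf x - (⟪K (L x), x⟫_ℂ).im)) := by
  have hA0v : A0 v = -((r * I) • A x) - L x := by
    rw [← sub_eq_zero, ← eqn]
    abel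
  have hAx : (⟪A x, x⟫_ℂ).im = 0 := hA.im_inner_apply_self x
  have lyapunov_v : lyapunovOp A0 K θ v =
      -((r * I) • A x) - L x - (θ * r : ℂ) • K (A x) + (θ * I) • K (L x) := by
    have hI : θ * I * (r * I) = (-(θ * r) : ℂ) := by linear_combination (θ * r : ℂ) * I_mul_I
    simp only [lyapunovOp, _root_.sub_apply, _root_.smul_apply, mul_apply_eq_comp, hA0v, map_sub,
      map_neg, map_smul, smul_sub, smul_neg, smul_smul, hI, neg_smul]
    abel
  simp only [lyapunov_v, reApplyInnerSelf_apply, mul_apply_eq_comp, inner_add_left,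
    inner_sub_left, inner_neg_left, inner_smul_left, map_mul, conj_ofReal, conj_I, add_re, sub_re,
    neg_re, mul_re, mul_im, neg_im, ofReal_re, ofReal_im, I_re, I_im, hAx, RCLike.re_to_complex]
  ring

variable [CompleteSpace E]

lemma mul_im_inner_le_of_isPositive {κ N : ℝ} (hL : L.IsPositive) (hκ : 0 < κ) (hKN : ‖K‖ ≤ N)
    (θ : ℝ) (x : E) :
    θ * (⟪K (L x), x⟫_ℂ).im ≤
      κ * θ ^ 2 / 2 * ‖x‖ ^ 2 + N ^ 2 * ‖L‖ / (2 * κ) * L.reApplyInnerSelf x := by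
  have im_le : |(⟪K (L x), x⟫_ℂ).im| ≤ N * ‖L x‖ * ‖x‖ :=
    calc |(⟪K (L x), x⟫_ℂ).im| ≤ ‖K (L x)‖ * ‖x‖ :=
          (abs_im_le_norm _).trans (norm_inner_le_norm _ _)
      _ ≤ N * ‖L x‖ * ‖x‖ := by gcongr; exact K.le_of_opNorm_le hKN _
  calc θ * (⟪K (L x), x⟫_ℂ).im ≤ |θ| * (N * ‖L x‖ * ‖x‖) :=
        (le_abs_self _).trans (by rw [abs_mul]; gcongr)
    _ ≤ κ * |θ| ^ 2 / 2 * ‖x‖ ^ 2 + N ^ 2 / (2 * κ) * ‖L x‖ ^ 2 := by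
        have young := sq_nonneg (κ * |θ| * ‖x‖ - N * ‖L x‖)
        field_simp
        linarith
    _ ≤ κ * θ ^ 2 / 2 * ‖x‖ ^ 2 + N ^ 2 / (2 * κ) * (‖L‖ * L.reApplyInnerSelf x) := by
        rw [sq_abs]
        gcongr
        exact norm_apply_sq_le_of_isPositive hL x
    _ = κ * θ ^ 2 / 2 * ‖x‖ ^ 2 + N ^ 2 * ‖L‖ / (2 * κ) * L.reApplyInnerSelf x := by ring

lemma dissipation_lower_bound {κ M N δ : ℝ} (hL : L.IsPositive) (hκ : 0 < κ) (hM : 0 ≤ M)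
    (hδ : 0 ≤ δ) (hKN : ‖K‖ ≤ N) (δ_small : (M + N ^ 2 * ‖L‖ / (2 * κ)) * δ ≤ 1) {x : E}
    (coercive : κ * ‖x‖ ^ 2 ≤ (K * A).reApplyInnerSelf x + M * L.reApplyInnerSelf x) (r : ℝ) :
    δ * κ * (r ^ 2 / (1 + r ^ 2)) / 2 * ‖x‖ ^ 2 ≤ L.reApplyInnerSelf x +
      δ * (r / (1 + r ^ 2)) * (r * (K * A).reApplyInnerSelf x - (⟪K (L x), x⟫_ℂ).im) := by
  set θ := r / (1 + r ^ 2) with θ_def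
  set ρ := r ^ 2 / (1 + r ^ 2) with ρ_def
  have hl : 0 ≤ L.reApplyInnerSelf x := hL.2 x
  have hρ : 0 ≤ ρ := by positivity
  have θ_mul : θ * r = ρ := by rw [θ_def, ρ_def]; ring
  have ρ_le : ρ ≤ 1 := div_le_one_of_le₀ (by linarith) (by positivity)
  have θ_sq_le : θ ^ 2 ≤ ρ := by
    rw [div_pow, sq (1 + r ^ 2), ← div_div]
    exact div_le_self hρ (by nlinarith)
  have gain : κ * ρ * ‖x‖ ^ 2 ≤ ρ * (K * A).reApplyInnerSelf x + M * L.reApplyInnerSelf x := by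
    linarith [mul_le_mul_of_nonneg_left coercive hρ,
      mul_le_mul_of_nonneg_right ρ_le (mul_nonneg hM hl)]
  have loss : θ * (⟪K (L x), x⟫_ℂ).im ≤
      κ * ρ / 2 * ‖x‖ ^ 2 + N ^ 2 * ‖L‖ / (2 * κ) * L.reApplyInnerSelf x :=
    (mul_im_inner_le_of_isPositive hL hκ hKN θ x).trans (by gcongr)
  linear_combination δ * loss + δ * gain + L.reApplyInnerSelf x * δ_small +
    δ * (K * A).reApplyInnerSelf x * θ_mul

lemma hasStandardDecay_of_coercive {e κ M N δ : ℝ} (he : 0 < e) (hκ : 0 < κ) (hM : 0 ≤ M)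
    (hδ : 0 < δ) (hA0 : A0.IsSymmetric)
    (coercive_A0 : ∀ x, e * ‖x‖ ^ 2 ≤ A0.reApplyInnerSelf x) (hA : A.IsSymmetric)
    (hL : L.IsPositive) (hK : (I • (K * A0)).IsSymmetric) (hKN : ‖K‖ ≤ N)
    (coercive : ∀ x, κ * ‖x‖ ^ 2 ≤ (K * A).reApplyInnerSelf x + M * L.reApplyInnerSelf x)
    (δ_energy : N * ‖A0‖ * δ ≤ e / 2) (δ_small : (M + N ^ 2 * ‖L‖ / (2 * κ)) * δ ≤ 1) :
    HasStandardDecay A0 A L √((‖A0‖ + e / 2) / (e / 2)) (δ * κ / (2 * (‖A0‖ + e / 2))) := by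
  intro r u u' hu eqn t ht
  set θ := δ * (r / (1 + r ^ 2))
  have abs_θ_le : |θ| ≤ δ := by
    have : |r| / (1 + r ^ 2) ≤ 1 :=
      div_le_one_of_le₀ (by nlinarith [sq_nonneg (|r| - 1), sq_abs r]) (by positivity)
    rw [abs_mul, abs_div, abs_of_pos hδ, abs_of_pos (by positivity : 0 < 1 + r ^ 2)]
    exact mul_le_of_le_one_right hδ.le this
  have perturbation x := calc
    |(lyapunovOp A0 K θ).reApplyInnerSelf x - A0.reApplyInnerSelf x|
      ≤ |θ| * (‖K‖ * ‖A0‖) * ‖x‖ ^ 2 := abs_reApplyInnerSelf_lyapunovOp_sub_le A0 K θ x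
    _ ≤ δ * (N * ‖A0‖) * ‖x‖ ^ 2 := by gcongr
    _ ≤ e / 2 * ‖x‖ ^ 2 := by gcongr; linarith
  have decay := norm_le_exp_of_lyapunov (u := u) (α := e / 2) (β := ‖A0‖ + e / 2)
    (γ := δ * κ * (r ^ 2 / (1 + r ^ 2))) (half_pos he) (by positivity) (by positivity)
    (fun s hs => hasDerivWithinAt_reApplyInnerSelf
      (isSymmetric_lyapunovOp hA0 hK θ) (hu s hs))
    (fun s _ => by linarith [(abs_le.1 (perturbation (u s))).1, coercive_A0 (u s)])
    (fun s _ => by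
      linarith [(abs_le.1 (perturbation (u s))).2, (abs_le.1 (abs_reApplyInnerSelf_le A0 (u s))).2])
    (fun s hs => by
      rw [re_inner_lyapunovOp_of_equation hA θ r (eqn s hs)]
      linarith [dissipation_lower_bound hL hκ hM hδ.le hKN δ_small (coercive (u s)) r]) ht
  rwa [mul_div_right_comm] at decay

/-- Condition (K) at a single direction: `K A⁰` is skew-Hermitian, encoded as symmetry of `i K A⁰`,
and the Hermitian part of `K A` is positive definite on `ker L`. -/
structure IsCompensating (A0 A L K : E →L[ℂ] E) : Prop where
  isSymmetric : (I • (K * A0)).IsSymmetric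
  pos_on_ker : ∀ x, L x = 0 → x ≠ 0 → 0 < (K * A).reApplyInnerSelf x

end Compensation

theorem decay_standard_symmetric_general {E Ω : Type*} [NormedAddCommGroup E]
    [InnerProductSpace ℂ E] [FiniteDimensional ℂ E] [TopologicalSpace Ω] [CompactSpace Ω]
    {A0 L : E →L[ℂ] E} {A K : Ω → E →L[ℂ] E} (hA0 : A0.IsSymmetric)
    (A0_pos : ∀ x ≠ 0, 0 < A0.reApplyInnerSelf x) (hL : L.IsPositive)
    (hA : ∀ ω, (A ω).IsSymmetric) (A_cont : Continuous A) (K_cont : Continuous K)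
    (hK : ∀ ω, IsCompensating A0 (A ω) L (K ω)) :
    ∃ C > 0, ∃ c > 0, ∀ ω, HasStandardDecay A0 (A ω) L C c := by
  have : CompleteSpace E := FiniteDimensional.complete ℂ E
  obtain ⟨e, he, _, _, coercive_A0⟩ := exists_coercive_of_pos_on_ker
    (P := fun _ : Unit => A0) continuous_const isPositive_zero fun _ x _ => A0_pos x
  obtain ⟨κ, hκ, M, hM, coercive⟩ := exists_coercive_of_pos_on_ker (K_cont.mul A_cont) hL
    fun ω => (hK ω).pos_on_ker
  obtain ⟨N, hN⟩ := (isCompact_range K_cont.norm).bddAbove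
  obtain ⟨δ, hδ, small⟩ := exists_pos_mul_lt (lt_min one_pos (half_pos he))
    (max (M + N ^ 2 * ‖L‖ / (2 * κ)) (N * ‖A0‖))
  rw [lt_min_iff] at small
  refine ⟨√((‖A0‖ + e / 2) / (e / 2)), by positivity, δ * κ / (2 * (‖A0‖ + e / 2)), by positivity,
    fun ω => hasStandardDecay_of_coercive he hκ hM hδ hA0 (fun x => ?_) (hA ω) hL
      (hK ω).isSymmetric (hN (Set.mem_range_self ω)) (coercive ω) ?_ ?_⟩
  · simpa [reApplyInnerSelf_apply] using coercive_A0 () x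
  · exact (mul_le_mul_of_nonneg_right (le_max_right _ _) hδ.le).trans small.2.le
  · exact (mul_le_mul_of_nonneg_right (le_max_left _ _) hδ.le).trans small.1.le

section Matrices

/-- The operator on the Hermitian space `ℂᵐ` defined by a real matrix. -/
def euclideanOp (m : ℕ) :
    Matrix (Fin m) (Fin m) ℝ →⋆ₐ[ℝ] EuclideanSpace ℂ (Fin m) →L[ℂ] EuclideanSpace ℂ (Fin m) where
  toAlgHom := ((toEuclideanCLM (n := Fin m) (𝕜 := ℂ)).toAlgEquiv.toAlgHom.restrictScalars ℝ).comp
    ofRealAm.mapMatrix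
  map_star' X := by
    change toEuclideanCLM (𝕜 := ℂ) (cmap Xᴴ) = star (toEuclideanCLM (𝕜 := ℂ) (cmap X))
    rw [← map_star]
    congr 1
    ext i j
    simp [cmap, star_apply]

variable {m : ℕ} {X : Matrix (Fin m) (Fin m) ℝ}

lemma continuous_euclideanOp : Continuous (euclideanOp m) :=
  (euclideanOp m).toAlgHom.toLinearMap.continuous_of_finiteDimensional

lemma star_euclideanOp (X : Matrix (Fin m) (Fin m) ℝ) :
    star (euclideanOp m X) = euclideanOp m Xᵀ := by
  rw [← map_star, star_eq_conjTranspose, conjTranspose_eq_transpose_of_trivial]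

lemma isSymmetric_euclideanOp (hX : Xᵀ = X) : (euclideanOp m X).IsSymmetric := by
  have : IsSelfAdjoint (euclideanOp m X) := by rw [isSelfAdjoint_iff, star_euclideanOp, hX]
  exact this.isSymmetric

lemma isSymmetric_I_smul_euclideanOp (hX : Xᵀ = -X) : (I • euclideanOp m X).IsSymmetric := by
  have : IsSelfAdjoint (I • euclideanOp m X) := by
    simp [isSelfAdjoint_iff, star_euclideanOp, hX]
  exact this.isSymmetric

lemma reApplyInnerSelf_euclideanOp (X : Matrix (Fin m) (Fin m) ℝ) (x : EuclideanSpace ℂ (Fin m)) :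
    (euclideanOp m X).reApplyInnerSelf x = reIP (cmap X *ᵥ ofLp x) (ofLp x) := by
  rw [reApplyInnerSelf_apply, ← inner_conj_symm, RCLike.conj_re]
  rfl

lemma reApplyInnerSelf_euclideanOp_symP (X : Matrix (Fin m) (Fin m) ℝ)
    (x : EuclideanSpace ℂ (Fin m)) :
    (euclideanOp m (symP X)).reApplyInnerSelf x = (euclideanOp m X).reApplyInnerSelf x := by
  have adjoint_form : (⟪euclideanOp m Xᵀ x, x⟫_ℂ).re = (⟪euclideanOp m X x, x⟫_ℂ).re := by
    rw [← star_euclideanOp, star_eq_adjoint, adjoint_inner_left, ← inner_conj_symm, conj_re]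
  simp only [symP, map_smul, map_add, reApplyInnerSelf_apply, _root_.smul_apply,
    _root_.add_apply, inner_smul_left_eq_smul, inner_add_left, RCLike.re_to_complex, smul_re,
    add_re, adjoint_form, smul_eq_mul]
  ring

lemma cnrm_eq_norm (z : Fin m → ℂ) : cnrm z = ‖toLp 2 z‖ := by
  simp [cnrm, EuclideanSpace.norm_eq, normSq_eq_norm_sq]

lemma isPositive_euclideanOp (hX : Xᵀ = X)
    (nonneg : ∀ z : Fin m → ℂ, 0 ≤ reIP (cmap X *ᵥ z) z) : (euclideanOp m X).IsPositive :=
  ⟨isSymmetric_euclideanOp hX, fun x => by rw [reApplyInnerSelf_euclideanOp]; exact nonneg _⟩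

lemma isCompensating_euclideanOp {A0 A L K : Matrix (Fin m) (Fin m) ℝ}
    (skew : (K * A0)ᵀ = -(K * A0))
    (pos : ∀ z ∈ kerC L, z ≠ 0 → 0 < reIP (cmap (symP (K * A)) *ᵥ z) z) :
    IsCompensating (euclideanOp m A0) (euclideanOp m A) (euclideanOp m L) (euclideanOp m K) where
  isSymmetric := by rw [← map_mul]; exact isSymmetric_I_smul_euclideanOp skew
  pos_on_ker x hLx hx := by
    rw [← map_mul, ← reApplyInnerSelf_euclideanOp_symP, reApplyInnerSelf_euclideanOp]
    exact pos _ ((toLp_eq_zero 2).1 hLx) ((ofLp_eq_zero 2).not.2 hx)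

lemma HasStandardDecay.cnrm_le {A0 A L : Matrix (Fin m) (Fin m) ℝ} {C c r : ℝ}
    {u u' : ℝ → Fin m → ℂ}
    (decay : HasStandardDecay (euclideanOp m A0) (euclideanOp m A) (euclideanOp m L) C c)
    (hu : ∀ t, 0 ≤ t → HasDerivWithinAt u (u' t) (Set.Ici 0) t)
    (eqn : ∀ t, 0 ≤ t →
      cmap A0 *ᵥ u' t + ((r : ℂ) * I) • cmap A *ᵥ u t + cmap L *ᵥ u t = 0)
    {t : ℝ} (ht : 0 ≤ t) :
    cnrm (u t) ≤ C * Real.exp (-(c * (r ^ 2 / (1 + r ^ 2)) * t)) * cnrm (u 0) := by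
  simp only [cnrm_eq_norm]
  exact decay r (fun s => toLp 2 (u s)) (fun s => toLp 2 (u' s))
    (fun s hs => (PiLp.continuousLinearEquiv 2 ℝ fun _ : Fin m => ℂ).symm.hasFDerivAt
      |>.comp_hasDerivWithinAt s (hu s hs))
    (fun s hs => congrArg (toLp 2) (eqn s hs)) t ht

lemma mem_unitSphere_iff {ι : Type*} [Fintype ι] {ω : EuclideanSpace ℝ ι} :
    ω ∈ Metric.sphere 0 1 ↔ ∑ j, ω j ^ 2 = 1 := by
  rw [EuclideanSpace.sphere_zero_eq 1 zero_le_one, one_pow, Set.mem_ofPred_eq]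

lemma continuous_sum_smul {ι M : Type*} [Fintype ι] [TopologicalSpace M] [AddCommMonoid M]
    [ContinuousAdd M] [Module ℝ M] [ContinuousSMul ℝ M] (a : ι → M) :
    Continuous fun ω : ι → ℝ => ∑ j, ω j • a j :=
  continuous_finsetSum _ fun j _ => (continuous_apply j).smul continuous_const

lemma transpose_sum_smul {ι κ R : Type*} [Fintype ι] [Semiring R] {A : ι → Matrix κ κ R}
    (hA : ∀ j, (A j)ᵀ = A j) (ω : ι → R) : (∑ j, ω j • A j)ᵀ = ∑ j, ω j • A j := by
  simp only [transpose_sum, transpose_smul, hA]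

end Matrices

/-- **Theorem 1.1 (decay property of the standard type, pointwise estimate).**
Under conditions (A)₀ and (K), solutions of `A⁰û′ + i r A(ω) û + L û = 0` satisfy
`|û(t)| ≤ C e^{−c ρ(r) t} |û(0)|` with `ρ(r) = r²/(1+r²)`. -/
theorem decay_standard_symmetric
    (m n : ℕ) (hm : 1 ≤ m) (hn : 1 ≤ n)
    (A0 : Matrix (Fin m) (Fin m) ℝ) (A : Fin n → Matrix (Fin m) (Fin m) ℝ)
    (L : Matrix (Fin m) (Fin m) ℝ)
    -- condition (A)₀
    (hA0sym : A0ᵀ = A0) (hAsym : ∀ j, (A j)ᵀ = A j) (hLsym : Lᵀ = L)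
    (hA0pos : ∀ z : Fin m → ℂ, z ≠ 0 → 0 < reIP ((cmap A0).mulVec z) z)
    (hLnn : ∀ z : Fin m → ℂ, 0 ≤ reIP ((cmap L).mulVec z) z)
    (hLker : ∃ z : Fin m → ℂ, z ≠ 0 ∧ z ∈ kerC L)
    -- condition (K): a smooth compensating matrix family
    (K : (Fin n → ℝ) → Matrix (Fin m) (Fin m) ℝ)
    (hKsmooth : ∀ i j, ContDiff ℝ (⊤ : ℕ∞) (fun ω => K ω i j))
    (hKodd : ∀ ω : Fin n → ℝ, (∑ j, ω j ^ 2 = 1) → K (-ω) = - K ω)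
    (hKA0 : ∀ ω : Fin n → ℝ, (∑ j, ω j ^ 2 = 1) → (K ω * A0)ᵀ = -(K ω * A0))
    (hKpos : ∀ ω : Fin n → ℝ, (∑ j, ω j ^ 2 = 1) → ∀ z ∈ kerC L, z ≠ 0 →
      0 < reIP ((cmap (symP (K ω * (∑ j, ω j • A j)))).mulVec z) z) :
    ∃ C > (0:ℝ), ∃ c > (0:ℝ), ∀ r : ℝ, 0 ≤ r → ∀ ω : Fin n → ℝ, (∑ j, ω j ^ 2 = 1) →
      ∀ u u' : ℝ → (Fin m → ℂ),
      (∀ t : ℝ, 0 ≤ t → HasDerivWithinAt u (u' t) (Set.Ici 0) t) →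
      (∀ t : ℝ, 0 ≤ t →
        (cmap A0).mulVec (u' t)
          + ((r : ℂ) * Complex.I) • (cmap (∑ j, ω j • A j)).mulVec (u t)
          + (cmap L).mulVec (u t) = 0) →
      ∀ t : ℝ, 0 ≤ t →
        cnrm (u t) ≤ C * Real.exp (-(c * (r ^ 2 / (1 + r ^ 2)) * t)) * cnrm (u 0) := by
  have K_cont : Continuous K := continuous_matrix fun i j => (hKsmooth i j).continuous
  have ω_cont : Continuous fun ω : Metric.sphere (0 : EuclideanSpace ℝ (Fin n)) 1 => ofLp ω.1 :=
    (PiLp.continuous_ofLp 2 _).comp continuous_subtype_val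
  obtain ⟨C, hC, c, hc, decay⟩ := decay_standard_symmetric_general
    (Ω := Metric.sphere (0 : EuclideanSpace ℝ (Fin n)) 1) (isSymmetric_euclideanOp hA0sym)
    (fun x hx => by
      rw [reApplyInnerSelf_euclideanOp]; exact hA0pos _ ((ofLp_eq_zero 2).not.2 hx))
    (isPositive_euclideanOp hLsym hLnn)
    (fun ω => isSymmetric_euclideanOp (transpose_sum_smul hAsym ω.1))
    (continuous_euclideanOp.comp ((continuous_sum_smul A).comp ω_cont))
    (continuous_euclideanOp.comp (K_cont.comp ω_cont))
    (fun ω => isCompensating_euclideanOp (hKA0 ω.1 (mem_unitSphere_iff.1 ω.2))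
      (hKpos ω.1 (mem_unitSphere_iff.1 ω.2)))
  exact ⟨C, hC, c, hc, fun r _ ω hω u u' hu eqn t ht =>
    (decay ⟨toLp 2 ω, mem_unitSphere_iff.2 hω⟩).cnrm_le hu eqn ht⟩
end
end

section
/- Let L be a real symmetric m×m matrix with L ≥ 0 on ℂᵐ, and let M be a real symmetric m×m matrix. Then M > 0 on Ker(L) if and only if there exists α > 0 such that αM + L > 0 on ℂᵐ. -/
open Matrix BigOperators Finset

noncomputable section

/-- Skew-symmetric part `X₂ = (X − Xᵀ)/2` of a real square matrix. -/
def skewP {m : ℕ} (X : Matrix (Fin m) (Fin m) ℝ) : Matrix (Fin m) (Fin m) ℝ :=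
  (2⁻¹ : ℝ) • (X - Xᵀ)

/-!
On the unit sphere the form of `M` is positive wherever the nonnegative form of `L` vanishes, since
a positive semidefinite form vanishes only on the kernel of its matrix. By compactness some
`α M + L` with `α > 0` is then positive on the whole sphere, and by homogeneity everywhere off `0`.
-/

theorem exists_pos_forall_mul_add_pos_of_isCompact {X : Type*} [TopologicalSpace X] {K : Set X}
    (hK : IsCompact K) {f g : X → ℝ} (hf : ContinuousOn f K) (hg : ContinuousOn g K)
    (hg_nonneg : ∀ x ∈ K, 0 ≤ g x) (hfg : ∀ x ∈ K, g x = 0 → 0 < f x) :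
    ∃ α > 0, ∀ x ∈ K, 0 < α * f x + g x := by
  -- A lower bound `α` of `max f (g / (1 + |f|))` satisfies `α * (1 - f) ≤ g` wherever `f ≤ 0`.
  have hden (x : X) : 0 < 1 + |f x| := by positivity
  have hcont : ContinuousOn (fun x ↦ max (f x) (g x / (1 + |f x|))) K :=
    hf.sup (hg.div (continuousOn_const.add hf.abs) fun x _ ↦ (hden x).ne')
  have hpos : ∀ x ∈ K, 0 < max (f x) (g x / (1 + |f x|)) := fun x hx ↦
    lt_max_iff.2 <| (hg_nonneg x hx).eq_or_lt.imp (fun h ↦ hfg x hx h.symm) (div_pos · (hden x))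
  obtain ⟨α, hα, hle⟩ := hK.exists_forall_le' hcont hpos
  refine ⟨α, hα, fun x hx ↦ ?_⟩
  rcases lt_or_ge 0 (f x) with hfx | hfx
  · exact add_pos_of_pos_of_nonneg (mul_pos hα hfx) (hg_nonneg x hx)
  · have hαg : α ≤ g x / (1 + |f x|) := (le_max_iff.1 (hle x hx)).resolve_left (by linarith)
    rw [le_div_iff₀ (hden x), abs_of_nonpos hfx] at hαg
    linarith

theorem exists_pos_forall_mul_add_pos_of_homogeneous {E : Type*} [NormedAddCommGroup E]
    [NormedSpace ℝ E] [ProperSpace E] {f g : E → ℝ} {k : ℕ} (hf : Continuous f) (hg : Continuous g)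
    (hf_smul : ∀ t > (0 : ℝ), ∀ x, f (t • x) = t ^ k * f x)
    (hg_smul : ∀ t > (0 : ℝ), ∀ x, g (t • x) = t ^ k * g x)
    (hg_nonneg : ∀ x, 0 ≤ g x) (hfg : ∀ x ≠ 0, g x = 0 → 0 < f x) :
    ∃ α > 0, ∀ x ≠ 0, 0 < α * f x + g x := by
  obtain ⟨α, hα, hsphere⟩ := exists_pos_forall_mul_add_pos_of_isCompact
    (isCompact_sphere (0 : E) 1) hf.continuousOn hg.continuousOn (fun x _ ↦ hg_nonneg x)
    fun x hx ↦ hfg x (ne_zero_of_mem_unit_sphere ⟨x, hx⟩)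
  refine ⟨α, hα, fun x hx ↦ ?_⟩
  have hnorm : 0 < ‖x‖⁻¹ := inv_pos.2 (norm_pos_iff.2 hx)
  have hunit : ‖x‖⁻¹ • x ∈ Metric.sphere (0 : E) 1 := by
    rw [mem_sphere_zero_iff_norm]
    exact norm_smul_inv_norm (𝕜 := ℝ) hx
  have hscaled : 0 < ‖x‖⁻¹ ^ k * (α * f x + g x) := by
    calc 0 < α * f (‖x‖⁻¹ • x) + g (‖x‖⁻¹ • x) := hsphere _ hunit
      _ = ‖x‖⁻¹ ^ k * (α * f x + g x) := by rw [hf_smul _ hnorm, hg_smul _ hnorm]; ring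
  exact pos_of_mul_pos_right hscaled (pow_pos hnorm k).le

section ReForm

open scoped ComplexOrder

variable {n 𝕜 : Type*} [Fintype n] [RCLike 𝕜]

/-- The real part `z ↦ Re⟨Az, z⟩` of the sesquilinear form of a square matrix `A`, for which
`A > 0` on a subspace means positivity at its nonzero vectors. `A` need not be Hermitian. -/
def reForm (A : Matrix n n 𝕜) (z : n → 𝕜) : ℝ := RCLike.re (star z ⬝ᵥ A *ᵥ z)

theorem continuous_reForm (A : Matrix n n 𝕜) : Continuous (reForm A) :=
  RCLike.continuous_re.comp <|
    continuous_star.dotProduct (continuous_const.matrix_mulVec continuous_id)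

theorem reForm_smul (A : Matrix n n 𝕜) (t : ℝ) (z : n → 𝕜) :
    reForm A (t • z) = t ^ 2 * reForm A z := by
  simp only [reForm, star_smul, star_trivial, mulVec_smul, smul_dotProduct, dotProduct_smul,
    RCLike.smul_re]
  ring

theorem reForm_smul_add (α : ℝ) (A B : Matrix n n 𝕜) (z : n → 𝕜) :
    reForm (α • A + B) z = α * reForm A z + reForm B z := by
  simp only [reForm, add_mulVec, smul_mulVec, dotProduct_add, dotProduct_smul, map_add,
    RCLike.smul_re]

theorem reForm_eq_zero_of_mulVec_eq_zero {A : Matrix n n 𝕜} {z : n → 𝕜} (hz : A *ᵥ z = 0) :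
    reForm A z = 0 := by
  rw [reForm, hz, dotProduct_zero, map_zero]

theorem coe_reForm {A : Matrix n n 𝕜} (hA : A.IsHermitian) (z : n → 𝕜) :
    (reForm A z : 𝕜) = star z ⬝ᵥ A *ᵥ z :=
  RCLike.conj_eq_iff_re.1 (RCLike.conj_eq_iff_im.2 (hA.im_star_dotProduct_mulVec_self z))

theorem posSemidef_of_reForm_nonneg {A : Matrix n n 𝕜} (hA : A.IsHermitian)
    (hA_nonneg : ∀ z, 0 ≤ reForm A z) : A.PosSemidef :=
  .of_dotProduct_mulVec_nonneg hA fun z ↦ by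
    rw [← coe_reForm hA z]
    exact RCLike.ofReal_nonneg.2 (hA_nonneg z)

theorem mulVec_eq_zero_of_reForm_eq_zero {A : Matrix n n 𝕜} (hA : A.PosSemidef) {z : n → 𝕜}
    (hz : reForm A z = 0) : A *ᵥ z = 0 := by
  rw [← hA.dotProduct_mulVec_zero_iff, ← coe_reForm hA.isHermitian, hz, RCLike.ofReal_zero]

theorem positivity_on_kernel_iff_global_general {L : Matrix n n 𝕜} (hL : L.PosSemidef)
    (M : Matrix n n 𝕜) :
    (∀ z, L *ᵥ z = 0 → z ≠ 0 → 0 < reForm M z) ↔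
      ∃ α > (0 : ℝ), ∀ z ≠ 0, 0 < reForm (α • M + L) z := by
  simp only [reForm_smul_add]
  constructor
  · intro hker
    exact exists_pos_forall_mul_add_pos_of_homogeneous (continuous_reForm M) (continuous_reForm L)
      (fun t _ ↦ reForm_smul M t) (fun t _ ↦ reForm_smul L t) hL.re_dotProduct_nonneg
      fun z hz hLz ↦ hker z (mulVec_eq_zero_of_reForm_eq_zero hL hLz) hz
  · rintro ⟨α, hα, hpos⟩ z hLz hz
    have hαM := hpos z hz
    rw [reForm_eq_zero_of_mulVec_eq_zero hLz, add_zero] at hαM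
    exact pos_of_mul_pos_right hαM hα.le

end ReForm

theorem reIP_mulVec_self {m : ℕ} (A : Matrix (Fin m) (Fin m) ℂ) (z : Fin m → ℂ) :
    reIP (A *ᵥ z) z = reForm A z :=
  congrArg Complex.re (dotProduct_comm (A *ᵥ z) (star z))

theorem cmap_smul_add {a b : ℕ} (α : ℝ) (X Y : Matrix (Fin a) (Fin b) ℝ) :
    cmap (α • X + Y) = α • cmap X + cmap Y := by
  ext i j
  simp [cmap]

theorem isHermitian_cmap {m : ℕ} {X : Matrix (Fin m) (Fin m) ℝ} (hX : Xᵀ = X) :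
    (cmap X).IsHermitian :=
  (isHermitian_iff_isSymm.2 hX).map _ fun x ↦ (Complex.conj_ofReal x).symm

/-- **Remark 1.** For real symmetric `L ≥ 0` and real symmetric `M`:
`M > 0` on `Ker(L)` iff `αM + L > 0` on `ℂᵐ` for some `α > 0`. -/
theorem positivity_on_kernel_iff_global
    (m : ℕ) (hm : 1 ≤ m)
    (L M : Matrix (Fin m) (Fin m) ℝ)
    (hLsym : Lᵀ = L)
    (hLnn : ∀ z : Fin m → ℂ, 0 ≤ reIP ((cmap L).mulVec z) z)
    (hMsym : Mᵀ = M) :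
    (∀ z ∈ kerC L, z ≠ 0 → 0 < reIP ((cmap M).mulVec z) z) ↔
      (∃ α > (0:ℝ), ∀ z : Fin m → ℂ, z ≠ 0 →
        0 < reIP ((cmap (α • M + L)).mulVec z) z) := by
  simp only [reIP_mulVec_self, cmap_smul_add] at hLnn ⊢
  exact positivity_on_kernel_iff_global_general
    (posSemidef_of_reForm_nonneg (isHermitian_cmap hLsym) hLnn) (cmap M)
end
end

section
/- Assume conditions (A), (S), (S)₁ and (K). Then the system is uniformly dissipative of type (1,2): there exists a constant c > 0 such that for every r ≥ 0, every ω ∈ S^{n−1}, every λ ∈ ℂ and every nonzero φ ∈ ℂᵐ satisfying (λA⁰ + i r A(ω) + L)φ = 0, one has Re λ ≤ −c η(r), where η(r) = r²/(1 + r²)². -/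
open Matrix BigOperators Finset

noncomputable section

/-!
Testing the eigenvalue equation with `φ` bounds the component of `φ` off `Ker L₁` by `-Re λ`.
Testing with `S` controls the component off `Ker L`: by (S)₁ the flux `r Im ⟨φ, S A(ω) φ⟩` is at
most a constant times `r`, `‖φ‖` and the norm of the component of `φ` off `Ker L₁`. Testing with
`K(ω)` bounds `r` times the squared norm of the component in `Ker L`, since `K(ω) A(ω)` is coercive
there uniformly on the compact sphere.
For `‖φ‖ = 1`, Young's inequality applied twice turns these bounds into
`c r² / (1 + r²)² ≤ -Re λ`.
-/

open scoped ComplexStarModule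

section QuadraticForms

variable {𝕜 E : Type*} [RCLike 𝕜] [NormedAddCommGroup E] [InnerProductSpace 𝕜 E]

lemma norm_inner_apply_le (T : E →L[𝕜] E) (x y : E) :
    ‖inner 𝕜 x (T y)‖ ≤ ‖T‖ * ‖x‖ * ‖y‖ :=
  calc ‖inner 𝕜 x (T y)‖ ≤ ‖x‖ * ‖T y‖ := norm_inner_le_norm _ _
    _ ≤ ‖x‖ * (‖T‖ * ‖y‖) := by gcongr; exact T.le_opNorm y
    _ = ‖T‖ * ‖x‖ * ‖y‖ := by ring

lemma norm_inner_apply_le_norm_starProjection (N : Submodule 𝕜 E) [N.HasOrthogonalProjection]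
    {T : E →L[𝕜] E} (hT : ∀ y ∈ N, T y = 0) (x y : E) :
    ‖inner 𝕜 x (T y)‖ ≤ ‖T‖ * ‖x‖ * ‖Nᗮ.starProjection y‖ := by
  have hy : T y = T (Nᗮ.starProjection y) := by
    conv_lhs => rw [← N.starProjection_add_starProjection_orthogonal y, map_add,
      hT _ (N.starProjection_apply_mem y), zero_add]
  exact hy ▸ norm_inner_apply_le T x _

lemma norm_inner_self_apply_sub_starProjection_le (N : Submodule 𝕜 E) [N.HasOrthogonalProjection]
    (T : E →L[𝕜] E) (z : E) :
    ‖inner 𝕜 z (T z) - inner 𝕜 (N.starProjection z) (T (N.starProjection z))‖ ≤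
      2 * ‖T‖ * ‖z‖ * ‖Nᗮ.starProjection z‖ := by
  set p := N.starProjection z
  set q := Nᗮ.starProjection z
  have hz : z = p + q := (N.starProjection_add_starProjection_orthogonal z).symm
  have split : inner 𝕜 z (T z) - inner 𝕜 p (T p) = inner 𝕜 q (T z) + inner 𝕜 p (T q) := by
    nth_rw 1 2 [hz]
    simp only [hz, map_add, inner_add_left, inner_add_right]
    ring
  calc ‖inner 𝕜 z (T z) - inner 𝕜 p (T p)‖ ≤ ‖T‖ * ‖q‖ * ‖z‖ + ‖T‖ * ‖p‖ * ‖q‖ :=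
        split ▸ norm_add_le_of_le (norm_inner_apply_le T q z) (norm_inner_apply_le T p q)
    _ ≤ ‖T‖ * ‖q‖ * ‖z‖ + ‖T‖ * ‖z‖ * ‖q‖ := by gcongr; exact N.norm_starProjection_apply_le z
    _ = 2 * ‖T‖ * ‖z‖ * ‖q‖ := by ring

variable {Ω : Type*} [TopologicalSpace Ω] [CompactSpace Ω]

lemma exists_forall_norm_inner_self_apply_sub_starProjection_le (N : Submodule 𝕜 E)
    [N.HasOrthogonalProjection] {T : Ω → E →L[𝕜] E} (hT : Continuous T) :
    ∃ C ≥ 0, ∀ ω z, ‖z‖ = 1 →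
      ‖inner 𝕜 z (T ω z) - inner 𝕜 (N.starProjection z) (T ω (N.starProjection z))‖ ≤
        C * ‖Nᗮ.starProjection z‖ := by
  obtain ⟨M, hM, hTM⟩ := (isCompact_range hT).isBounded.exists_pos_norm_le
  refine ⟨2 * M, by positivity, fun ω z hz ↦
    (norm_inner_self_apply_sub_starProjection_le N (T ω) z).trans ?_⟩
  rw [hz, mul_one]
  gcongr
  exact hTM _ ⟨ω, rfl⟩

variable [FiniteDimensional 𝕜 E]

lemma exists_pos_forall_mul_sq_norm_le_re_inner
    (W : Submodule 𝕜 E) {T : Ω → E →L[𝕜] E} (hT : Continuous T)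
    (hpos : ∀ ω, ∀ z ∈ W, z ≠ 0 → 0 < RCLike.re (inner 𝕜 z (T ω z))) :
    ∃ c > 0, ∀ ω, ∀ z ∈ W, c * ‖z‖ ^ 2 ≤ RCLike.re (inner 𝕜 z (T ω z)) := by
  have : ProperSpace E := FiniteDimensional.proper_rclike 𝕜 E
  have hcompact : IsCompact (Set.univ ×ˢ (Metric.sphere 0 1 ∩ W) : Set (Ω × E)) :=
    isCompact_univ.prod ((isCompact_sphere 0 1).inter_right W.closed_of_finiteDimensional)
  obtain ⟨c, hc, hbound⟩ := hcompact.exists_forall_le' (a := 0)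
    (f := fun t ↦ RCLike.re (inner 𝕜 t.2 (T t.1 t.2))) (by fun_prop) fun t ⟨_, ht, hW⟩ ↦
      hpos t.1 t.2 hW (ne_zero_of_mem_unit_sphere ⟨t.2, ht⟩)
  refine ⟨c, hc, fun ω z hz ↦ ?_⟩
  rcases eq_or_ne z 0 with rfl | hz0
  · simp
  have hn : 0 < ‖z‖ := norm_pos_iff.2 hz0
  have hunit := hbound (ω, ((‖z‖⁻¹ : ℝ) : 𝕜) • z)
    ⟨trivial, by simp [norm_smul, hn.ne'], W.smul_mem _ hz⟩
  simp only [map_smul, inner_smul_left, inner_smul_right, RCLike.conj_ofReal,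
    RCLike.re_ofReal_mul] at hunit
  rwa [← mul_assoc, ← mul_inv, inv_mul_eq_div, le_div_iff₀ (by positivity), ← sq] at hunit

lemma exists_pos_forall_le_re_inner_add_mul_norm_starProjection (N : Submodule 𝕜 E)
    {T : Ω → E →L[𝕜] E} (hT : Continuous T)
    (hpos : ∀ ω, ∀ z ∈ N, z ≠ 0 → 0 < RCLike.re (inner 𝕜 z (T ω z))) :
    ∃ c > 0, ∃ C ≥ 0, ∀ ω z, ‖z‖ = 1 →
      c ≤ RCLike.re (inner 𝕜 z (T ω z)) + C * ‖Nᗮ.starProjection z‖ := by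
  obtain ⟨c, hc, hcoercive⟩ := exists_pos_forall_mul_sq_norm_le_re_inner N hT hpos
  obtain ⟨M, hM, hdefect⟩ := exists_forall_norm_inner_self_apply_sub_starProjection_le N hT
  refine ⟨c, hc, c + M, by positivity, fun ω z hz ↦ ?_⟩
  set p := N.starProjection z
  set q := Nᗮ.starProjection z
  have hdiff := (neg_le_abs _).trans ((RCLike.abs_re_le_norm _).trans (hdefect ω z hz))
  rw [map_sub] at hdiff
  have hpyth : 1 = ‖p‖ ^ 2 + ‖q‖ ^ 2 := by
    rw [← N.norm_sq_eq_add_norm_sq_starProjection, hz, one_pow]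
  calc c = c * ‖p‖ ^ 2 + c * ‖q‖ ^ 2 := by rw [← mul_add, ← hpyth, mul_one]
    _ ≤ RCLike.re (inner 𝕜 p (T ω p)) + c * ‖q‖ := by
      gcongr
      · exact hcoercive ω p (N.starProjection_apply_mem z)
      · exact sq_le (norm_nonneg q) (hz ▸ Nᗮ.norm_starProjection_apply_le z)
    _ ≤ RCLike.re (inner 𝕜 z (T ω z)) + (c + M) * ‖q‖ := by linarith

end QuadraticForms

section Accretive

variable {E : Type*} [NormedAddCommGroup E] [InnerProductSpace ℂ E] [CompleteSpace E]

lemma re_inner_star_apply_self (T : E →L[ℂ] E) (z : E) :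
    (inner ℂ z ((star T) z)).re = (inner ℂ z (T z)).re := by
  rw [ContinuousLinearMap.star_eq_adjoint, ContinuousLinearMap.adjoint_inner_right]
  exact inner_re_symm (𝕜 := ℂ) _ _

lemma im_inner_self_apply_eq_zero {T : E →L[ℂ] E} (hT : IsSelfAdjoint T) (z : E) :
    (inner ℂ z (T z)).im = 0 :=
  hT.isSymmetric.im_inner_self_apply z

lemma re_inner_self_apply_eq_zero {T : E →L[ℂ] E} (hT : star T = -T) (z : E) :
    (inner ℂ z (T z)).re = 0 := by
  have := re_inner_star_apply_self T z
  rw [hT, _root_.neg_apply, inner_neg_right, Complex.neg_re] at this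
  linarith

lemma re_inner_realPart_apply (T : E →L[ℂ] E) (z : E) :
    (inner ℂ z ((ℜ T : E →L[ℂ] E) z)).re = (inner ℂ z (T z)).re := by
  rw [realPart_apply_coe, _root_.smul_apply, _root_.add_apply,
    inner_smul_right_eq_smul, inner_add_right, Complex.smul_re, Complex.add_re,
    re_inner_star_apply_self, smul_eq_mul]
  ring

lemma realPart_apply_eq_zero_of_re_inner_eq_zero {T : E →L[ℂ] E}
    (hT : ∀ z, 0 ≤ (inner ℂ z (T z)).re) {z : E} (hz : (inner ℂ z (T z)).re = 0) :
    (ℜ T : E →L[ℂ] E) z = 0 := by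
  have hpos : 0 ≤ (ℜ T : E →L[ℂ] E) := by
    rw [ContinuousLinearMap.nonneg_iff_isPositive, ContinuousLinearMap.isPositive_def']
    refine ⟨(ℜ T).2, fun x ↦ ?_⟩
    rw [ContinuousLinearMap.reApplyInnerSelf_apply, inner_re_symm]
    exact (hT x).trans_eq (re_inner_realPart_apply T x).symm
  obtain ⟨R, hR⟩ := CStarAlgebra.nonneg_iff_eq_star_mul_self.1 hpos
  have hRz : R z = 0 := by
    rw [← re_inner_realPart_apply, hR, ContinuousLinearMap.star_eq_adjoint,
      mul_apply_eq_comp, ContinuousLinearMap.adjoint_inner_right] at hz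
    exact (inner_self_eq_zero (𝕜 := ℂ)).1 (Complex.ext hz (inner_self_im (𝕜 := ℂ) _))
  rw [hR, mul_apply_eq_comp, hRz, map_zero]

lemma exists_pos_forall_mul_sq_norm_starProjection_le_re_inner [FiniteDimensional ℂ E]
    {T : E →L[ℂ] E} (hT : ∀ z, 0 ≤ (inner ℂ z (T z)).re) :
    ∃ c > 0, ∀ z, c * ‖(ℜ T : E →L[ℂ] E).kerᗮ.starProjection z‖ ^ 2 ≤ (inner ℂ z (T z)).re := by
  set N := (ℜ T : E →L[ℂ] E).ker
  have hpos : ∀ z ∈ Nᗮ, z ≠ 0 → 0 < (inner ℂ z (T z)).re := fun z hz hz0 ↦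
    (hT z).lt_of_ne' fun h ↦ hz0 <| N.orthogonal_disjoint.le_bot
      ⟨realPart_apply_eq_zero_of_re_inner_eq_zero hT h, hz⟩
  obtain ⟨c, hc, hbound⟩ := exists_pos_forall_mul_sq_norm_le_re_inner Nᗮ
    (T := fun _ : Unit ↦ T) continuous_const fun _ ↦ hpos
  refine ⟨c, hc, fun z ↦ (hbound () _ (Nᗮ.starProjection_apply_mem z)).trans_eq ?_⟩
  set p := N.starProjection z
  set q := Nᗮ.starProjection z
  have hz : z = p + q := (N.starProjection_add_starProjection_orthogonal z).symm
  have hp : (ℜ T : E →L[ℂ] E) p = 0 := N.starProjection_apply_mem z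
  have hpq : inner ℂ p ((ℜ T : E →L[ℂ] E) q) = 0 := by
    rw [← ContinuousLinearMap.adjoint_inner_left, ← ContinuousLinearMap.star_eq_adjoint,
      (ℜ T).2.star_eq, hp, inner_zero_left]
  calc (inner ℂ q (T q)).re = (inner ℂ q ((ℜ T : E →L[ℂ] E) q)).re :=
        (re_inner_realPart_apply T q).symm
    _ = (inner ℂ z ((ℜ T : E →L[ℂ] E) z)).re := by
        rw [hz, map_add, hp, zero_add, inner_add_left, hpq, zero_add]
    _ = (inner ℂ z (T z)).re := re_inner_realPart_apply T z

end Accretive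

-- Young's inequality absorbs first `r * q`, then `r * a`, into `r ^ 2`; each absorption costs a
-- factor `1 + r ^ 2`.
lemma exists_pos_mul_le_of_interpolation {C₁ C₂ C₃ : ℝ} (hC₁ : 0 ≤ C₁) (hC₂ : 0 ≤ C₂)
    (hC₃ : 0 ≤ C₃) :
    ∃ c > 0, ∀ r x a q : ℝ, 0 ≤ r → 0 ≤ x → a ^ 2 ≤ C₁ * x → q ^ 2 ≤ C₂ * (x + r * a) →
      r ≤ C₃ * (x + (1 + r) * q) → c * (r ^ 2 / (1 + r ^ 2) ^ 2) ≤ x := by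
  set C := 2 * C₃ + 4 * C₃ ^ 2 * C₂ + 4 * C₃ ^ 4 * C₂ ^ 2 * C₁
  refine ⟨(1 + C)⁻¹, by positivity, fun r x a q hr hx ha hq h ↦ ?_⟩
  set D := 1 + r ^ 2 with hD
  have hD_one : 1 ≤ D := by nlinarith
  have hr_le : 2 * r ≤ D := by nlinarith [sq_nonneg (1 - r)]
  have absorb_q : r ^ 2 ≤ C₃ * D * x + 2 * C₃ ^ 2 * D * q ^ 2 := by
    have young : 2 * r * (C₃ * (1 + r) * q) ≤ r ^ 2 + (C₃ * (1 + r) * q) ^ 2 :=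
      two_mul_le_add_sq _ _
    have hq_weight : (C₃ * (1 + r) * q) ^ 2 ≤ 2 * C₃ ^ 2 * D * q ^ 2 := by
      linear_combination (C₃ * q) ^ 2 * hr_le + 2 * (C₃ * q) ^ 2 * hD
    have hx_weight : 2 * (C₃ * r * x) ≤ C₃ * D * x := by
      linear_combination (C₃ * x) * hr_le
    linear_combination 2 * r * h + young + hq_weight + hx_weight
  have absorb_a : r ^ 2 ≤ C * D ^ 2 * x := by
    have young : 2 * r * (2 * C₃ ^ 2 * C₂ * D * a) ≤ r ^ 2 + (2 * C₃ ^ 2 * C₂ * D * a) ^ 2 :=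
      two_mul_le_add_sq _ _
    have ha_weight : (2 * C₃ ^ 2 * C₂ * D * a) ^ 2 ≤ 4 * C₃ ^ 4 * C₂ ^ 2 * C₁ * D ^ 2 * x := by
      linear_combination (2 * C₃ ^ 2 * C₂ * D) ^ 2 * ha
    have hq_weight : 2 * C₃ ^ 2 * D * q ^ 2 ≤ 2 * C₃ ^ 2 * D * (C₂ * (x + r * a)) := by gcongr
    have hx_weight :
        (2 * C₃ + 4 * C₃ ^ 2 * C₂) * D * x ≤ (2 * C₃ + 4 * C₃ ^ 2 * C₂) * D ^ 2 * x := by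
      gcongr
      exact le_self_pow₀ hD_one two_ne_zero
    linarith
  rw [inv_mul_le_iff₀ (by positivity), div_le_iff₀ (by positivity)]
  have : 0 ≤ D ^ 2 * x := by positivity
  linarith

section FourierModes

variable {E : Type*} [NormedAddCommGroup E] [InnerProductSpace ℂ E]

/-- `φ` is the amplitude of a plane wave `exp (λ t + i r ω · x) φ` solving
`A⁰ u_t + ∑ⱼ Aʲ u_{xⱼ} + L u = 0`, where `A` stands for `A(ω)`. -/
def IsFourierMode (A₀ A L : E →L[ℂ] E) (r : ℝ) (lam : ℂ) (φ : E) : Prop :=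
  (lam • A₀ + ((r : ℂ) * Complex.I) • A + L) φ = 0

namespace IsFourierMode

variable {A₀ A L : E →L[ℂ] E} {r : ℝ} {lam : ℂ} {φ : E}

lemma smul (h : IsFourierMode A₀ A L r lam φ) (a : ℂ) : IsFourierMode A₀ A L r lam (a • φ) := by
  rw [IsFourierMode, map_smul, h, smul_zero]

lemma inner_mul_apply (h : IsFourierMode A₀ A L r lam φ) (X : E →L[ℂ] E) :
    lam * inner ℂ φ ((X * A₀) φ) + r * Complex.I * inner ℂ φ ((X * A) φ) +
      inner ℂ φ ((X * L) φ) = 0 := by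
  simpa [inner_add_right, inner_smul_right] using congrArg (fun v ↦ inner ℂ φ (X v)) h

variable [CompleteSpace E]

lemma re_inner_mul_apply (h : IsFourierMode A₀ A L r lam φ) {S : E →L[ℂ] E}
    (hSA₀ : IsSelfAdjoint (S * A₀)) :
    (inner ℂ φ ((S * L) φ)).re =
      -lam.re * (inner ℂ φ ((S * A₀) φ)).re + r * (inner ℂ φ ((S * A) φ)).im := by
  have := congrArg Complex.re (h.inner_mul_apply S)
  simp only [Complex.add_re, Complex.mul_re, Complex.mul_im, Complex.ofReal_re, Complex.ofReal_im,
    Complex.I_re, Complex.I_im, Complex.zero_re, im_inner_self_apply_eq_zero hSA₀] at this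
  linear_combination this

lemma re_inner_apply (h : IsFourierMode A₀ A L r lam φ) (hA₀ : IsSelfAdjoint A₀)
    (hA : IsSelfAdjoint A) :
    (inner ℂ φ (L φ)).re = -lam.re * (inner ℂ φ (A₀ φ)).re := by
  simpa [im_inner_self_apply_eq_zero hA] using h.re_inner_mul_apply (S := 1) (by rwa [one_mul])

lemma mul_re_inner_mul_apply (h : IsFourierMode A₀ A L r lam φ) {K : E →L[ℂ] E}
    (hKA₀ : star (K * A₀) = -(K * A₀)) :
    r * (inner ℂ φ ((K * A) φ)).re =
      -lam.re * (inner ℂ φ ((K * A₀) φ)).im - (inner ℂ φ ((K * L) φ)).im := by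
  have := congrArg Complex.im (h.inner_mul_apply K)
  simp only [Complex.add_im, Complex.mul_re, Complex.mul_im, Complex.ofReal_re, Complex.ofReal_im,
    Complex.I_re, Complex.I_im, Complex.zero_im, re_inner_self_apply_eq_zero hKA₀] at this
  linear_combination this

lemma re_nonpos (h : IsFourierMode A₀ A L r lam φ) (hφ : φ ≠ 0) (hA₀ : IsSelfAdjoint A₀)
    (hA : IsSelfAdjoint A) (hA₀pos : ∀ z ≠ 0, 0 < (inner ℂ z (A₀ z)).re)
    (hL : ∀ z, 0 ≤ (inner ℂ z (L z)).re) : lam.re ≤ 0 := by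
  have := hL φ
  rw [h.re_inner_apply hA₀ hA] at this
  exact neg_nonneg.1 (nonneg_of_mul_nonneg_left this (hA₀pos φ hφ))

end IsFourierMode

section Estimates

variable [FiniteDimensional ℂ E] [CompleteSpace E] {Ω : Type*} [TopologicalSpace Ω]
  [CompactSpace Ω] {A₀ L : E →L[ℂ] E}

lemma exists_sq_norm_starProjection_ker_realPart_le (hA₀ : IsSelfAdjoint A₀)
    (hL : ∀ z, 0 ≤ (inner ℂ z (L z)).re) :
    ∃ C ≥ 0, ∀ (A : E →L[ℂ] E) (r : ℝ) (lam : ℂ) (φ : E), IsSelfAdjoint A → lam.re ≤ 0 →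
      ‖φ‖ = 1 → IsFourierMode A₀ A L r lam φ →
      ‖(ℜ L : E →L[ℂ] E).kerᗮ.starProjection φ‖ ^ 2 ≤ C * -lam.re := by
  obtain ⟨c, hc, hcoercive⟩ := exists_pos_forall_mul_sq_norm_starProjection_le_re_inner hL
  refine ⟨‖A₀‖ / c, by positivity, fun A r lam φ hA hlam hφ h ↦ ?_⟩
  rw [div_mul_eq_mul_div, le_div_iff₀' hc]
  calc c * ‖(ℜ L : E →L[ℂ] E).kerᗮ.starProjection φ‖ ^ 2 ≤ (inner ℂ φ (L φ)).re := hcoercive φ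
    _ = -lam.re * (inner ℂ φ (A₀ φ)).re := h.re_inner_apply hA₀ hA
    _ ≤ -lam.re * ‖A₀‖ := by
      gcongr
      · linarith
      · simpa [hφ] using (Complex.re_le_norm _).trans (norm_inner_apply_le A₀ φ φ)
    _ = ‖A₀‖ * -lam.re := mul_comm _ _

lemma exists_sq_norm_starProjection_ker_le (hA₀ : IsSelfAdjoint A₀) {S : E →L[ℂ] E}
    {A : Ω → E →L[ℂ] E} (hAc : Continuous A) (hA : ∀ ω, IsSelfAdjoint (A ω))
    (hSA₀ : IsSelfAdjoint (S * A₀)) (hSL : ∀ z, 0 ≤ (inner ℂ z ((S * L + L) z)).re)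
    (hker : (ℜ (S * L + L) : E →L[ℂ] E).ker = L.ker)
    (hSA : ∀ ω z, (ℜ L : E →L[ℂ] E) z = 0 → (inner ℂ z ((S * A ω) z)).im ≤ 0) :
    ∃ C ≥ 0, ∀ (r : ℝ) (ω : Ω) (lam : ℂ) (φ : E), 0 ≤ r → lam.re ≤ 0 → ‖φ‖ = 1 →
      IsFourierMode A₀ (A ω) L r lam φ →
      ‖L.kerᗮ.starProjection φ‖ ^ 2 ≤
        C * (-lam.re + r * ‖(ℜ L : E →L[ℂ] E).kerᗮ.starProjection φ‖) := by
  obtain ⟨c, hc, hcoercive⟩ := exists_pos_forall_mul_sq_norm_starProjection_le_re_inner hSL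
  simp only [hker] at hcoercive
  obtain ⟨M, hM, hdefect⟩ := exists_forall_norm_inner_self_apply_sub_starProjection_le
    (ℜ L : E →L[ℂ] E).ker (T := fun ω ↦ S * A ω) (by fun_prop)
  refine ⟨(‖S * A₀ + A₀‖ + M) / c, by positivity, fun r ω lam φ hr hlam hφ h ↦ ?_⟩
  set a := ‖(ℜ L : E →L[ℂ] E).kerᗮ.starProjection φ‖
  have hx : 0 ≤ -lam.re := neg_nonneg.2 hlam
  have hSA_le : (inner ℂ φ ((S * A ω) φ)).im ≤ M * a := by
    have hdiff := (Complex.im_le_norm _).trans (hdefect ω φ hφ)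
    have hproj := hSA ω _ ((ℜ L : E →L[ℂ] E).ker.starProjection_apply_mem φ)
    rw [Complex.sub_im] at hdiff
    linarith
  have hSA₀_le : (inner ℂ φ ((S * A₀ + A₀) φ)).re ≤ ‖S * A₀ + A₀‖ := by
    simpa only [hφ, mul_one] using
      (Complex.re_le_norm _).trans (norm_inner_apply_le (S * A₀ + A₀) φ φ)
  rw [div_mul_eq_mul_div, le_div_iff₀' hc]
  calc c * ‖L.kerᗮ.starProjection φ‖ ^ 2 ≤ (inner ℂ φ ((S * L + L) φ)).re := hcoercive φ
    _ = -lam.re * (inner ℂ φ ((S * A₀ + A₀) φ)).re + r * (inner ℂ φ ((S * A ω) φ)).im := by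
      simp only [_root_.add_apply, inner_add_right, Complex.add_re, h.re_inner_mul_apply hSA₀,
        h.re_inner_apply hA₀ (hA ω)]
      ring
    _ ≤ -lam.re * ‖S * A₀ + A₀‖ + r * (M * a) := by gcongr
    _ ≤ (‖S * A₀ + A₀‖ + M) * (-lam.re + r * a) := by
      linarith [mul_nonneg hM hx, (by positivity : 0 ≤ ‖S * A₀ + A₀‖ * (r * a))]

lemma exists_le_mul_norm_starProjection_ker {A K : Ω → E →L[ℂ] E} (hAc : Continuous A)
    (hKc : Continuous K) (hKA₀ : ∀ ω, star (K ω * A₀) = -(K ω * A₀))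
    (hKA : ∀ ω z, L z = 0 → z ≠ 0 → 0 < (inner ℂ z ((K ω * A ω) z)).re) :
    ∃ C ≥ 0, ∀ (r : ℝ) (ω : Ω) (lam : ℂ) (φ : E), 0 ≤ r → lam.re ≤ 0 → ‖φ‖ = 1 →
      IsFourierMode A₀ (A ω) L r lam φ →
      r ≤ C * (-lam.re + (1 + r) * ‖L.kerᗮ.starProjection φ‖) := by
  obtain ⟨c, hc, C, hC, hcoercive⟩ := exists_pos_forall_le_re_inner_add_mul_norm_starProjection
    L.ker (T := fun ω ↦ K ω * A ω) (by fun_prop) hKA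
  obtain ⟨M, hM, hKM⟩ := (isCompact_range hKc).isBounded.exists_pos_norm_le
  refine ⟨(M * ‖A₀‖ + M * ‖L‖ + C) / c, by positivity, fun r ω lam φ hr hlam hφ h ↦ ?_⟩
  set q := ‖L.kerᗮ.starProjection φ‖
  have hx : 0 ≤ -lam.re := neg_nonneg.2 hlam
  have hK : ‖K ω‖ ≤ M := hKM _ ⟨ω, rfl⟩
  have hKA₀_le : (inner ℂ φ ((K ω * A₀) φ)).im ≤ M * ‖A₀‖ := by
    calc _ ≤ ‖K ω * A₀‖ := by
          simpa [hφ] using (Complex.im_le_norm _).trans (norm_inner_apply_le (K ω * A₀) φ φ)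
      _ ≤ M * ‖A₀‖ := norm_mul_le_of_le hK le_rfl
  have hKL_le : -(inner ℂ φ ((K ω * L) φ)).im ≤ M * ‖L‖ * q := by
    calc _ ≤ ‖inner ℂ φ ((K ω * L) φ)‖ := (neg_le_abs _).trans (Complex.abs_im_le_norm _)
      _ ≤ ‖K ω * L‖ * q := by
        simpa only [hφ, mul_one] using norm_inner_apply_le_norm_starProjection L.ker
          (T := K ω * L) (fun z hz ↦ by rw [mul_apply_eq_comp, show L z = 0 from hz, map_zero]) φ φ
      _ ≤ M * ‖L‖ * q := by gcongr; exact norm_mul_le_of_le hK le_rfl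
  rw [div_mul_eq_mul_div, le_div_iff₀' hc]
  calc c * r ≤ ((inner ℂ φ ((K ω * A ω) φ)).re + C * q) * r := by gcongr; exact hcoercive ω φ hφ
    _ = -lam.re * (inner ℂ φ ((K ω * A₀) φ)).im - (inner ℂ φ ((K ω * L) φ)).im + C * r * q := by
      linear_combination h.mul_re_inner_mul_apply (hKA₀ ω)
    _ ≤ -lam.re * (M * ‖A₀‖) + M * ‖L‖ * q + C * r * q := by
      rw [sub_eq_add_neg]
      gcongr
    _ ≤ (M * ‖A₀‖ + M * ‖L‖ + C) * (-lam.re + (1 + r) * q) := by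
      have h₁ : 0 ≤ M * ‖A₀‖ * ((1 + r) * q) := by positivity
      have h₂ : 0 ≤ M * ‖L‖ * (-lam.re + r * q) := by positivity
      have h₃ : 0 ≤ C * (-lam.re + q) := by positivity
      linear_combination h₁ + h₂ + h₃

theorem uniform_dissipativity_type_one_two_general {S : E →L[ℂ] E} {A K : Ω → E →L[ℂ] E}
    (hAc : Continuous A) (hKc : Continuous K)
    (hA₀ : IsSelfAdjoint A₀) (hA : ∀ ω, IsSelfAdjoint (A ω))
    (hA₀pos : ∀ z ≠ 0, 0 < (inner ℂ z (A₀ z)).re) (hL : ∀ z, 0 ≤ (inner ℂ z (L z)).re)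
    (hSA₀ : IsSelfAdjoint (S * A₀)) (hSL : ∀ z, 0 ≤ (inner ℂ z ((S * L + L) z)).re)
    (hker : (ℜ (S * L + L) : E →L[ℂ] E).ker = L.ker)
    (hSA : ∀ ω z, (ℜ L : E →L[ℂ] E) z = 0 → (inner ℂ z ((S * A ω) z)).im ≤ 0)
    (hKA₀ : ∀ ω, star (K ω * A₀) = -(K ω * A₀))
    (hKA : ∀ ω z, L z = 0 → z ≠ 0 → 0 < (inner ℂ z ((K ω * A ω) z)).re) :
    ∃ c > 0, ∀ (r : ℝ) (ω : Ω) (lam : ℂ) (φ : E), 0 ≤ r → φ ≠ 0 →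
      IsFourierMode A₀ (A ω) L r lam φ → lam.re ≤ -(c * (r ^ 2 / (1 + r ^ 2) ^ 2)) := by
  obtain ⟨C₁, hC₁, off_ker_realPart⟩ := exists_sq_norm_starProjection_ker_realPart_le hA₀ hL
  obtain ⟨C₂, hC₂, off_ker⟩ :=
    exists_sq_norm_starProjection_ker_le hA₀ hAc hA hSA₀ hSL hker hSA
  obtain ⟨C₃, hC₃, frequency⟩ := exists_le_mul_norm_starProjection_ker hAc hKc hKA₀ hKA
  obtain ⟨c, hc, combine⟩ := exists_pos_mul_le_of_interpolation hC₁ hC₂ hC₃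
  refine ⟨c, hc, fun r ω lam φ hr hφ h ↦ ?_⟩
  have hlam : lam.re ≤ 0 := h.re_nonpos hφ hA₀ (hA ω) hA₀pos hL
  have hunit : ‖((‖φ‖⁻¹ : ℝ) : ℂ) • φ‖ = 1 := by simp [norm_smul, hφ]
  have h' := h.smul ((‖φ‖⁻¹ : ℝ) : ℂ)
  exact le_neg.1 <| combine r (-lam.re) _ _ hr (neg_nonneg.2 hlam)
    (off_ker_realPart _ r lam _ (hA ω) hlam hunit h') (off_ker r ω lam _ hr hlam hunit h')
    (frequency r ω lam _ hr hlam hunit h')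

end Estimates

end FourierModes

section RealMatrices

open WithLp

lemma isCompact_setOf_sum_sq_eq_one (ι : Type*) [Fintype ι] :
    IsCompact {ω : ι → ℝ | ∑ j, ω j ^ 2 = 1} := by
  have : {ω : ι → ℝ | ∑ j, ω j ^ 2 = 1} = ofLp '' Metric.sphere (0 : EuclideanSpace ℝ ι) 1 := by
    rw [EuclideanSpace.sphere_zero_eq _ zero_le_one]
    ext ω
    simpa using ⟨fun h ↦ ⟨toLp 2 ω, h, rfl⟩, fun ⟨_, h, hω⟩ ↦ hω ▸ h⟩
  rw [this]
  exact (isCompact_sphere _ _).image (PiLp.continuous_ofLp 2 _)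

variable {ι : Type*} [Fintype ι] [DecidableEq ι]

/-- The operator on the Hermitian space `ℂ^ι` given by a real matrix. -/
def complexCLM :
    Matrix ι ι ℝ →⋆ₐ[ℝ] (EuclideanSpace ℂ ι →L[ℂ] EuclideanSpace ℂ ι) :=
  (StarAlgHom.restrictScalars ℝ (Matrix.toEuclideanCLM (n := ι) (𝕜 := ℂ)).toStarAlgHom).comp
    { Complex.ofRealAm.mapMatrix with
      map_star' := fun X ↦ by ext; simp [star_eq_conjTranspose] }

lemma continuous_complexCLM : Continuous (complexCLM (ι := ι)) :=
  LinearMap.continuous_of_finiteDimensional (complexCLM (ι := ι)).toAlgHom.toLinearMap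

lemma star_complexCLM (X : Matrix ι ι ℝ) : star (complexCLM X) = complexCLM Xᵀ := by
  rw [← map_star, star_eq_conjTranspose, conjTranspose_eq_transpose_of_trivial]

lemma isSelfAdjoint_complexCLM {X : Matrix ι ι ℝ} (hX : Xᵀ = X) : IsSelfAdjoint (complexCLM X) := by
  rw [IsSelfAdjoint, star_complexCLM, hX]

variable {m : ℕ} (X : Matrix (Fin m) (Fin m) ℝ)

lemma complexCLM_toLp (z : Fin m → ℂ) : complexCLM X (toLp 2 z) = toLp 2 (cmap X *ᵥ z) := rfl

lemma reIP_eq_re_inner (x y : Fin m → ℂ) : reIP x y = (inner ℂ (toLp 2 y) (toLp 2 x)).re := rfl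

lemma mem_kerC_iff {z : Fin m → ℂ} : z ∈ kerC X ↔ complexCLM X (toLp 2 z) = 0 := by
  rw [complexCLM_toLp, toLp_eq_zero]
  rfl

variable {X} in
lemma ker_complexCLM_eq_of_kerC_eq {Y : Matrix (Fin m) (Fin m) ℝ} (h : kerC X = kerC Y) :
    (complexCLM X).ker = (complexCLM Y).ker := by
  ext z
  exact (mem_kerC_iff X).symm.trans ((Set.ext_iff.1 h _).trans (mem_kerC_iff Y))

lemma complexCLM_symP : complexCLM (symP X) = ℜ (complexCLM X) := by
  rw [realPart_apply_coe, symP, map_smul, map_add, star_complexCLM]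

lemma symP_add (Y : Matrix (Fin m) (Fin m) ℝ) : symP (X + Y) = symP X + symP Y := by
  simp only [symP, transpose_add]
  module

lemma complexCLM_symP_mul_add_symP (Y : Matrix (Fin m) (Fin m) ℝ) :
    complexCLM (symP (X * Y) + symP Y) = ℜ (complexCLM X * complexCLM Y + complexCLM Y) := by
  rw [← symP_add, complexCLM_symP, map_add complexCLM, map_mul complexCLM]

lemma I_smul_complexCLM_skewP :
    Complex.I • complexCLM (skewP X) = ℜ (Complex.I • complexCLM X) := by
  rw [realPart_apply_coe, skewP, map_smul, map_sub, star_smul, star_complexCLM, smul_comm,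
    smul_sub, sub_eq_add_neg, ← neg_smul, RCLike.star_def, Complex.conj_I]

lemma reIP_symP (z : Fin m → ℂ) :
    reIP (cmap (symP X) *ᵥ z) z = (inner ℂ (toLp 2 z) (complexCLM X (toLp 2 z))).re := by
  rw [reIP_eq_re_inner, ← complexCLM_toLp, complexCLM_symP, re_inner_realPart_apply]

lemma reIP_I_smul_skewP (z : Fin m → ℂ) :
    reIP ((Complex.I • cmap (skewP X)) *ᵥ z) z =
      -(inner ℂ (toLp 2 z) (complexCLM X (toLp 2 z))).im := by
  have : toLp 2 ((Complex.I • cmap (skewP X)) *ᵥ z) =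
      (ℜ (Complex.I • complexCLM X) : EuclideanSpace ℂ (Fin m) →L[ℂ] _) (toLp 2 z) := by
    rw [← I_smul_complexCLM_skewP, Matrix.smul_mulVec]
    rfl
  rw [reIP_eq_re_inner, this, re_inner_realPart_apply]
  simp

lemma isFourierMode_complexCLM_iff {A₀ A L : Matrix (Fin m) (Fin m) ℝ} {r : ℝ} {lam : ℂ}
    {φ : Fin m → ℂ} :
    IsFourierMode (complexCLM A₀) (complexCLM A) (complexCLM L) r lam (toLp 2 φ) ↔
      (lam • cmap A₀ + ((r : ℂ) * Complex.I) • cmap A + cmap L) *ᵥ φ = 0 := by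
  rw [← toLp_eq_zero 2, add_mulVec, add_mulVec, smul_mulVec, smul_mulVec]
  rfl

end RealMatrices

/-- **Theorem 4.2 (i) (uniform dissipativity of type (1,2)).**
Under conditions (A), (S), (S)₁ and (K), every eigenvalue of `(λA⁰ + i r A(ω) + L)φ = 0`
satisfies `Re λ ≤ −c η(r)` with `η(r) = r²/(1+r²)²`. -/
theorem uniform_dissipativity_type_one_two
    (m n : ℕ) (hm : 1 ≤ m) (hn : 1 ≤ n)
    (A0 : Matrix (Fin m) (Fin m) ℝ) (A : Fin n → Matrix (Fin m) (Fin m) ℝ)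
    (L : Matrix (Fin m) (Fin m) ℝ)
    -- condition (A)
    (hA0sym : A0ᵀ = A0) (hAsym : ∀ j, (A j)ᵀ = A j)
    (hA0pos : ∀ z : Fin m → ℂ, z ≠ 0 → 0 < reIP ((cmap A0).mulVec z) z)
    (hLnn : ∀ z : Fin m → ℂ, 0 ≤ reIP ((cmap L).mulVec z) z)
    (hLker : ∃ z : Fin m → ℂ, z ≠ 0 ∧ z ∈ kerC L)
    -- condition (S)
    (S : Matrix (Fin m) (Fin m) ℝ)
    (hSA0 : (S * A0)ᵀ = S * A0)
    (hSLnn : ∀ z : Fin m → ℂ, 0 ≤ reIP ((cmap (symP (S * L) + symP L)).mulVec z) z)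
    (hSLker : kerC (symP (S * L) + symP L) = kerC L)
    -- condition (S)₁ : `i(SA(ω))₂ ≥ 0` on `Ker(L₁)`
    (hS1 : ∀ ω : Fin n → ℝ, (∑ j, ω j ^ 2 = 1) → ∀ z ∈ kerC (symP L),
      0 ≤ reIP ((Complex.I • cmap (skewP (S * (∑ j, ω j • A j)))).mulVec z) z)
    -- condition (K): a smooth compensating matrix family
    (K : (Fin n → ℝ) → Matrix (Fin m) (Fin m) ℝ)
    (hKsmooth : ∀ i j, ContDiff ℝ (⊤ : ℕ∞) (fun ω => K ω i j))
    (hKodd : ∀ ω : Fin n → ℝ, (∑ j, ω j ^ 2 = 1) → K (-ω) = - K ω)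
    (hKA0 : ∀ ω : Fin n → ℝ, (∑ j, ω j ^ 2 = 1) → (K ω * A0)ᵀ = -(K ω * A0))
    (hKpos : ∀ ω : Fin n → ℝ, (∑ j, ω j ^ 2 = 1) → ∀ z ∈ kerC L, z ≠ 0 →
      0 < reIP ((cmap (symP (K ω * (∑ j, ω j • A j)))).mulVec z) z) :
    ∃ c > (0:ℝ), ∀ r : ℝ, 0 ≤ r → ∀ ω : Fin n → ℝ, (∑ j, ω j ^ 2 = 1) →
      ∀ lam : ℂ, ∀ phi : Fin m → ℂ, phi ≠ 0 →
      (lam • cmap A0 + ((r : ℂ) * Complex.I) • cmap (∑ j, ω j • A j) + cmap L).mulVec phi = 0 →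
      lam.re ≤ -(c * (r ^ 2 / (1 + r ^ 2) ^ 2)) := by
  have hsphere := isCompact_iff_compactSpace.1 (isCompact_setOf_sum_sq_eq_one (Fin n))
  have hA : Continuous fun ω : Fin n → ℝ ↦ ∑ j, ω j • A j := by fun_prop
  have hK : Continuous K := continuous_matrix fun i j ↦ (hKsmooth i j).continuous
  obtain ⟨c, hc, hdissipative⟩ := uniform_dissipativity_type_one_two_general
    (Ω := {ω : Fin n → ℝ | ∑ j, ω j ^ 2 = 1}) (L := complexCLM L) (S := complexCLM S)
    (A := fun ω ↦ complexCLM (∑ j, ω.1 j • A j)) (K := fun ω ↦ complexCLM (K ω))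
    (hAc := continuous_complexCLM.comp (hA.comp continuous_subtype_val))
    (hKc := continuous_complexCLM.comp (hK.comp continuous_subtype_val))
    (hA₀ := isSelfAdjoint_complexCLM hA0sym)
    (hA := fun ω ↦ isSelfAdjoint_complexCLM (by simp only [transpose_sum, transpose_smul, hAsym]))
    (hA₀pos := fun z hz ↦ hA0pos z.ofLp (by simpa using hz)) (hL := fun z ↦ hLnn z.ofLp)
    (hSA₀ := by simpa only [map_mul] using isSelfAdjoint_complexCLM hSA0)
    (hSL := fun z ↦ by simpa only [← symP_add, reIP_symP, map_add, map_mul] using hSLnn z.ofLp)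
    (hker := complexCLM_symP_mul_add_symP S L ▸ ker_complexCLM_eq_of_kerC_eq hSLker)
    (hSA := fun ω z hz ↦ by
      simpa only [reIP_I_smul_skewP, neg_nonneg, map_mul] using
        hS1 ω.1 ω.2 z.ofLp ((mem_kerC_iff _).2 (complexCLM_symP L ▸ hz)))
    (hKA₀ := fun ω ↦ by rw [← map_mul, star_complexCLM, hKA0 ω.1 ω.2, map_neg])
    (hKA := fun ω z hz hz0 ↦ by
      simpa only [reIP_symP, map_mul] using
        hKpos ω.1 ω.2 z.ofLp ((mem_kerC_iff _).2 hz) (by simpa using hz0))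
  exact ⟨c, hc, fun r hr ω hω lam φ hφ h ↦ hdissipative r ⟨ω, hω⟩ lam (WithLp.toLp 2 φ) hr
    (by simpa using hφ) (isFourierMode_complexCLM_iff.2 h)⟩
end
end
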